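/- Assume every family A_{N,ℓ} satisfies the growth bound (MS). Then: (i) for every ℓ and every test graph T̂ (possibly disconnected) all of whose edge labels are matrices of the family A_{N,ℓ}, τ⁰_N[T̂] = O(N^{𝔣(T̂)/2 − c(T̂)}) as N → ∞, where 𝔣(T̂) is the sum of 𝔣 over the connected components of T̂; and (ii) consequently, for any test graph T' labeled by matrices of the families A_{N,1}, …, A_{N,L}, writing T'_ℓ for the test graph formed by the disjoint union of the colored components of T' carrying matrices of A_{N,ℓ}, one has ∏_{ℓ=1}^L τ⁰_N[T'_ℓ] = O(N^{Σ_{S∈CC(T')} 𝔣(S)/2 − |CC(T')|}) as N → ∞. -/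

import Mathlib

open MeasureTheory ProbabilityTheory Filter Matrix Asymptotics
open scoped BigOperators ENNReal
open scoped Classical

noncomputable section

/-- The diagonal projection `Δ` on `N × N` complex matrices. -/
def dproj {N : ℕ} (A : Matrix (Fin N) (Fin N) ℂ) : Matrix (Fin N) (Fin N) ℂ :=
  Matrix.of fun i j => if i = j then A i j else 0

/-- The operator norm of a matrix acting on `ℓ²({1,…,N})`. -/
def matOpNorm {N : ℕ} (A : Matrix (Fin N) (Fin N) ℂ) : ℝ :=
  ‖Matrix.toEuclideanCLM (𝕜 := ℂ) A‖

/-! ### Multigraph combinatorics -/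

section Graph

variable {V E : Type} (src tgt : E → V)

/-- Adjacency through an edge avoiding a forbidden set `F` of edges
(direction is ignored). -/
def adjOn (F : Set E) (a b : V) : Prop :=
  ∃ e, e ∉ F ∧ ((src e = a ∧ tgt e = b) ∨ (src e = b ∧ tgt e = a))

/-- Reachability in the graph, using only edges outside `F`. -/
def reachOn (F : Set E) : V → V → Prop :=
  Relation.ReflTransGen (adjOn src tgt F)

lemma adjOn_symm (F : Set E) : Symmetric (adjOn src tgt F) := by
  rintro a b ⟨e, he, h⟩
  exact ⟨e, he, h.symm⟩

/-- The setoid of connectivity using edges outside `F`. -/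
def connSetoid (F : Set E) : Setoid V :=
  ⟨reachOn src tgt F,
    ⟨fun _ => Relation.ReflTransGen.refl,
     fun h => (@Relation.ReflTransGen.symmetric _ _ ⟨fun _ _ h' => adjOn_symm src tgt F h'⟩).symm _ _ h,
     fun h h' => Relation.ReflTransGen.trans h h'⟩⟩

/-- Number of connected components of the graph with the edges in `F` deleted. -/
def ncompAvoiding (F : Set E) : ℕ :=
  Nat.card (Quotient (connSetoid src tgt F))

/-- Number of connected components. -/
def ncomp : ℕ := ncompAvoiding src tgt ∅

/-- The graph is connected. -/
def IsConnectedGraph : Prop := ∀ a b : V, reachOn src tgt ∅ a b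

/-- A cut edge (bridge): deleting it disconnects its endpoints. -/
def IsCutEdge (e : E) : Prop := ¬ reachOn src tgt {e} (src e) (tgt e)

/-- The set of cut edges. -/
def cutEdges : Set E := {e | IsCutEdge src tgt e}

/-- The setoid whose classes are the two-edge connected components
(connected components after deleting all cut edges). -/
def teccSetoid : Setoid V := connSetoid src tgt (cutEdges src tgt)

/-- Degree, in the forest of two-edge connected components, of a
two-edge connected component: the number of cut edges incident to it. -/
def teccDeg (c : Quotient (teccSetoid src tgt)) : ℕ :=
  Nat.card {e : E // IsCutEdge src tgt e ∧
    (Quotient.mk (teccSetoid src tgt) (src e) = c ∨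
      Quotient.mk (teccSetoid src tgt) (tgt e) = c)}

/-- `𝔣(G)`: the number of leaves of the forest of two-edge connected components,
single-vertex trees of the forest counting twice. -/
def frak : ℕ :=
  Nat.card {c : Quotient (teccSetoid src tgt) // teccDeg src tgt c = 1} +
    2 * Nat.card {c : Quotient (teccSetoid src tgt) // teccDeg src tgt c = 0}

end Graph

/-! ### Graph monomials -/

/-- A graph monomial: a finite directed multigraph with two roots and edges
labelled by a family index in `Fin L` and an index in `K`.  (Connectedness is
required separately via `IsConnectedGraph`.) -/
structure GraphMonomial (L : ℕ) (K : Type) where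
  V : Type
  E : Type
  fintV : Fintype V
  fintE : Fintype E
  src : E → V
  tgt : E → V
  vin : V
  vout : V
  labL : E → Fin L
  labK : E → K

attribute [instance] GraphMonomial.fintV GraphMonomial.fintE

namespace GraphMonomial

variable {L : ℕ} {K : Type} (g : GraphMonomial L K)

/-- Evaluation of a graph monomial in a collection of matrices. -/
def eval {N : ℕ} (A : Fin L → K → Matrix (Fin N) (Fin N) ℂ) :
    Matrix (Fin N) (Fin N) ℂ :=
  Matrix.of fun i j => ∑ φ : g.V → Fin N,
    if φ g.vin = j ∧ φ g.vout = i then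
      ∏ e : g.E, A (g.labL e) (g.labK e) (φ (g.tgt e)) (φ (g.src e))
    else 0

/-- The starting vertex of a step `(e, b)`: `e` traversed forward if `b = true`,
backward otherwise. -/
def stepSrc (s : g.E × Bool) : g.V := if s.2 then g.src s.1 else g.tgt s.1

/-- The ending vertex of a step. -/
def stepTgt (s : g.E × Bool) : g.V := if s.2 then g.tgt s.1 else g.src s.1

/-- A simple cycle of the underlying undirected multigraph: a nonempty cyclic
sequence of steps with pairwise distinct edges and pairwise distinct vertices. -/
def IsSimpleCycle (c : List (g.E × Bool)) : Prop :=
  ∃ h : c ≠ [],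
    (∀ i : Fin c.length,
      g.stepTgt (c.get i) =
        g.stepSrc (c.get ⟨((i : ℕ) + 1) % c.length,
          Nat.mod_lt _ (List.length_pos_iff.mpr h)⟩)) ∧
    (c.map Prod.fst).Nodup ∧ (c.map g.stepSrc).Nodup

/-- A cycle is directed when it traverses all its edges consistently with
their orientations (one way or the other). -/
def IsDirectedCycleList (c : List (g.E × Bool)) : Prop :=
  (∀ s ∈ c, s.2 = true) ∨ (∀ s ∈ c, s.2 = false)

/-- `S` is the edge set of some simple cycle. -/
def IsCycleEdgeSet (S : Finset g.E) : Prop :=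
  ∃ c, g.IsSimpleCycle c ∧ (c.map Prod.fst).toFinset = S

/-- The underlying graph is an oriented cactus: it is connected, every simple
cycle is directed, and every edge belongs to exactly one simple cycle. -/
def IsOrientedCactus : Prop :=
  IsConnectedGraph g.src g.tgt ∧
  (∀ c, g.IsSimpleCycle c → g.IsDirectedCycleList c) ∧
  (∀ e : g.E, ∃! S : Finset g.E, g.IsCycleEdgeSet S ∧ e ∈ S)

/-- A cactus-type monomial: an oriented cactus whose input and output coincide. -/
def IsCactusType : Prop := g.vin = g.vout ∧ g.IsOrientedCactus

/-- A member of `ℱ`: a directed simple path (oriented from the input, at the far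
right, to the output, at the far left) with oriented cacti attached to the
vertices of the path (the root of each cactus being a path vertex). -/
def IsPathCactusType : Prop :=
  IsConnectedGraph g.src g.tgt ∧
  ∃ (d : ℕ) (v : Fin (d + 1) → g.V) (f : Fin d → g.E),
    Function.Injective v ∧ Function.Injective f ∧
    (∀ j : Fin d, g.src (f j) = v j.succ ∧ g.tgt (f j) = v j.castSucc) ∧
    g.vin = v (Fin.last d) ∧ g.vout = v 0 ∧
    (∀ c, g.IsSimpleCycle c → g.IsDirectedCycleList c ∧ ∀ s ∈ c, s.1 ∉ Set.range f) ∧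
    (∀ e : g.E, e ∉ Set.range f →
      ∃! S : Finset g.E, g.IsCycleEdgeSet S ∧ e ∈ S) ∧
    (∀ w : g.V, ∃! j : Fin (d + 1), reachOn g.src g.tgt (Set.range f) w (v j))

end GraphMonomial
/-! ### Random matrices, expectations, test graphs -/

/-- The entries of the random matrix `X` are measurable. -/
def EntriesMeasurable {N : ℕ} {Ω : Type} [MeasurableSpace Ω]
    (X : Ω → Matrix (Fin N) (Fin N) ℂ) : Prop :=
  ∀ i j, Measurable fun ω => X ω i j

/-- The entries of the random matrix `X` are essentially bounded. -/
def EntriesBounded {N : ℕ} {Ω : Type} [MeasurableSpace Ω] (μ : Measure Ω)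
    (X : Ω → Matrix (Fin N) (Fin N) ℂ) : Prop :=
  ∃ C : ℝ, ∀ᵐ ω ∂μ, ∀ i j, ‖X ω i j‖ ≤ C

/-- The σ-algebra generated by the entries of the matrices of a family. -/
def famSigma {N : ℕ} {Ω K : Type} [MeasurableSpace Ω]
    (A : K → Ω → Matrix (Fin N) (Fin N) ℂ) : MeasurableSpace Ω :=
  ⨆ k : K, ⨆ i : Fin N, ⨆ j : Fin N,
    MeasurableSpace.comap (fun ω => A k ω i j) inferInstance

/-- Permutation invariance of a family of `N × N` random matrices. -/
def PermInvariant {N : ℕ} {Ω K : Type} [MeasurableSpace Ω] (μ : Measure Ω)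
    (A : K → Ω → Matrix (Fin N) (Fin N) ℂ) : Prop :=
  ∀ σ : Equiv.Perm (Fin N),
    Measure.map (fun ω => fun (k : K) (i j : Fin N) => A k ω (σ i) (σ j)) μ =
      Measure.map (fun ω => fun (k : K) (i j : Fin N) => A k ω i j) μ

/-- A test graph with matrix-valued edge labels. -/
structure TestGraph (N : ℕ) (Ω : Type) where
  V : Type
  E : Type
  fintV : Fintype V
  fintE : Fintype E
  src : E → V
  tgt : E → V
  lab : E → Ω → Matrix (Fin N) (Fin N) ℂ

attribute [instance] TestGraph.fintV TestGraph.fintE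

namespace TestGraph

variable {N : ℕ} {Ω : Type} [MeasurableSpace Ω]

/-- Number of connected components `c(T)` of a test graph. -/
def ncc (T : TestGraph N Ω) : ℕ := ncomp T.src T.tgt

/-- The (unnormalized) trace observable of a test graph. -/
def tauInner (T : TestGraph N Ω) (ω : Ω) : ℂ :=
  ∑ φ : T.V → Fin N, ∏ e : T.E, T.lab e ω (φ (T.tgt e)) (φ (T.src e))

/-- The (unnormalized) injective trace observable of a test graph. -/
def tau0Inner (T : TestGraph N Ω) (ω : Ω) : ℂ :=
  ∑ φ : T.V → Fin N,
    if Function.Injective φ then ∏ e : T.E, T.lab e ω (φ (T.tgt e)) (φ (T.src e)) else 0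

/-- `τ_N[T]`. -/
def tau (T : TestGraph N Ω) (μ : Measure Ω) : ℂ :=
  ((N : ℂ) ^ T.ncc)⁻¹ * ∫ ω, T.tauInner ω ∂μ

/-- `τ⁰_N[T]`. -/
def tau0 (T : TestGraph N Ω) (μ : Measure Ω) : ℂ :=
  ((N : ℂ) ^ T.ncc)⁻¹ * ∫ ω, T.tau0Inner ω ∂μ

/-- The quotient test graph `T^π` associated with a partition `π` of the
vertices of `T`. -/
def quot (T : TestGraph N Ω) (π : Setoid T.V) : TestGraph N Ω where
  V := Quotient π
  E := T.E
  fintV := @Quotient.fintype _ T.fintV π fun _ _ => Classical.propDecidable _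
  fintE := T.fintE
  src := fun e => Quotient.mk π (T.src e)
  tgt := fun e => Quotient.mk π (T.tgt e)
  lab := T.lab

end TestGraph

/-- Monomial `D₀ X_{k(1)} D₁ ⋯ X_{k(d)} D_d` evaluated in a family of matrices:
the coefficients are given as an arbitrary function `D : ℕ → Matrix`. -/
def monomialEval {K : Type} {N : ℕ} (A : K → Matrix (Fin N) (Fin N) ℂ)
    (dd : ℕ) (kk : ℕ → K) (D : ℕ → Matrix (Fin N) (Fin N) ℂ) :
    Matrix (Fin N) (Fin N) ℂ :=
  D 0 * (List.ofFn fun j : Fin dd => A (kk ((j : ℕ) + 1)) * D ((j : ℕ) + 1)).prod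

/-- The centered product `(M₁ - ΔM₁)(M₂ - ΔM₂)⋯(Mₙ - ΔMₙ)`. -/
def centeredProd {N n : ℕ} (M : Fin n → Matrix (Fin N) (Fin N) ℂ) :
    Matrix (Fin N) (Fin N) ℂ :=
  (List.ofFn fun i : Fin n => M i - dproj (M i)).prod

/-- Mutual independence of the families `A 1, …, A L` of random matrices. -/
def IndepFamilies {Ω K : Type} {L : ℕ} [MeasurableSpace Ω] (μ : Measure Ω)
    (A : (N : ℕ) → Fin L → K → Ω → Matrix (Fin N) (Fin N) ℂ) : Prop :=
  ∀ N : ℕ, ProbabilityTheory.iIndep (fun ℓ : Fin L => famSigma (A N ℓ)) μ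

/-- Uniform boundedness, in operator norm, of families of random matrices. -/
def UnifOpNormBound {Ω K : Type} {L : ℕ} [MeasurableSpace Ω] (μ : Measure Ω)
    (A : (N : ℕ) → Fin L → K → Ω → Matrix (Fin N) (Fin N) ℂ) : Prop :=
  ∃ C : ℝ, ∀ (N : ℕ) (ℓ : Fin L) (k : K), ∀ᵐ ω ∂μ, matOpNorm (A N ℓ k ω) ≤ C

/-- The growth bound (MS) for the family `A · ℓ`:
for all graph monomials `g₁, …, gₘ` labelled in the single family `ℓ` and having
equal input and output, `E[∏ᵢ Tr gᵢ(A_N)] = O(N^{Σᵢ 𝔣(gᵢ)/2})` as `N → ∞`. -/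
def MSBound {Ω K : Type} {L : ℕ} [MeasurableSpace Ω] (μ : Measure Ω)
    (A : (N : ℕ) → Fin L → K → Ω → Matrix (Fin N) (Fin N) ℂ) (ℓ : Fin L) : Prop :=
  ∀ (m : ℕ), 1 ≤ m → ∀ gs : Fin m → GraphMonomial L K,
    (∀ i : Fin m, IsConnectedGraph (gs i).src (gs i).tgt ∧
      (∀ e, (gs i).labL e = ℓ) ∧ (gs i).vin = (gs i).vout) →
    (fun N : ℕ => ∫ ω, ∏ i : Fin m,
        Matrix.trace ((gs i).eval fun ℓ' k => A N ℓ' k ω) ∂μ)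
      =O[atTop] fun N : ℕ => (N : ℝ) ^ ((∑ i : Fin m, (frak (gs i).src (gs i).tgt : ℝ)) / 2)
/-! ### Colored subgraphs of a test graph -/

section ColSub

variable {V E : Type} (src tgt : E → V) {L : ℕ} (labL : E → Fin L)

/-- Source map of the union `T'_ℓ` of the colored components of color `ℓ`. -/
def colSubSrc (ℓ : Fin L) :
    {e : E // labL e = ℓ} → {v : V // ∃ e, labL e = ℓ ∧ (src e = v ∨ tgt e = v)} :=
  fun e => ⟨src e.1, e.1, e.2, Or.inl rfl⟩

/-- Target map of the union `T'_ℓ` of the colored components of color `ℓ`. -/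
def colSubTgt (ℓ : Fin L) :
    {e : E // labL e = ℓ} → {v : V // ∃ e, labL e = ℓ ∧ (src e = v ∨ tgt e = v)} :=
  fun e => ⟨tgt e.1, e.1, e.2, Or.inr rfl⟩

end ColSub
/-! ### Colored sub test graphs -/

section ColSubTG

variable {V E : Type} (src tgt : E → V) {L : ℕ} (labL : E → Fin L)

/-- The test graph `T'_ℓ`: the disjoint union of the colored components of
color `ℓ` of a test graph with underlying graph `(V, E, src, tgt)`. -/
def colSubTG [Fintype V] [Fintype E] (ℓ : Fin L) {Ω : Type} (N : ℕ)
    (lab : E → Ω → Matrix (Fin N) (Fin N) ℂ) : TestGraph N Ω where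
  V := {v : V // ∃ e, labL e = ℓ ∧ (src e = v ∨ tgt e = v)}
  E := {e : E // labL e = ℓ}
  fintV := Fintype.ofFinite _
  fintE := Fintype.ofFinite _
  src := colSubSrc src tgt labL ℓ
  tgt := colSubTgt src tgt labL ℓ
  lab := fun e => lab e.1

end ColSubTG
/-!
Grouping the maps `φ : V → {1, …, N}` by their kernel writes the trace of a graph as the sum, over
all partitions `π` of its vertices, of the injective traces of its quotients by `π`. An induction
on the number of vertices thus reduces the growth of injective traces to that of traces, provided
that identifying vertices does not increase `𝔣`. Now `𝔣` is the sum of `(2 - deg)⁺` over the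
vertices of the forest of two-edge connected components, and a nonempty set `X` of such vertices
with `b` boundary edges satisfies `2 - b ≤ ∑_X (2 - deg)⁺`, because a forest has fewer inner edges
in `X` than vertices: the constant function `1` and the indicators of one side of each inner edge
are linearly independent on `X`. Applying this to the fibers of the identification gives the
monotonicity. Finally, the trace is multiplicative and `𝔣` additive over connected components, so
the growth bound on products of connected graph monomials controls the trace of any graph.
-/

/-! ### Connectivity -/

section Connectivity

variable {V E : Type} {src tgt : E → V} {F : Set E} {a b : V}

lemma reachOn.symm (h : reachOn src tgt F a b) : reachOn src tgt F b a :=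
  (connSetoid src tgt F).symm h

lemma reachOn_src_tgt {e : E} (he : e ∉ F) : reachOn src tgt F (src e) (tgt e) :=
  Relation.ReflTransGen.single ⟨e, he, Or.inl ⟨rfl, rfl⟩⟩

lemma reachOn.map {V' E' : Type} {src' tgt' : E' → V'} {F' : Set E'} (f : V → V') (g : E → E')
    (hsrc : ∀ e, src' (g e) = f (src e)) (htgt : ∀ e, tgt' (g e) = f (tgt e))
    (hF : g ⁻¹' F' ⊆ F) (h : reachOn src tgt F a b) : reachOn src' tgt' F' (f a) (f b) := by
  refine Relation.ReflTransGen.lift f ?_ _ _ h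
  rintro _ _ ⟨e, he, ⟨rfl, rfl⟩ | ⟨rfl, rfl⟩⟩
  · exact ⟨g e, fun h' => he (hF h'), Or.inl ⟨hsrc e, htgt e⟩⟩
  · exact ⟨g e, fun h' => he (hF h'), Or.inr ⟨hsrc e, htgt e⟩⟩

lemma reachOn.anti {F' : Set E} (hF : F' ⊆ F) (h : reachOn src tgt F a b) :
    reachOn src tgt F' a b :=
  h.map id id (fun _ => rfl) (fun _ => rfl) hF

lemma reachOn.comp {V' : Type} (q : V → V') (h : reachOn src tgt F a b) :
    reachOn (q ∘ src) (q ∘ tgt) F (q a) (q b) :=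
  h.map q id (fun _ => rfl) (fun _ => rfl) subset_rfl

lemma IsCutEdge.of_comp {V' : Type} (q : V → V') {e : E}
    (h : IsCutEdge (q ∘ src) (q ∘ tgt) e) : IsCutEdge src tgt e :=
  fun h' => h (h'.comp q)

end Connectivity

section Components

variable {V E : Type} (src tgt : E → V)

/-- The set of connected components of a graph. -/
abbrev ConnComp : Type := Quotient (connSetoid src tgt ∅)

/-- The connected component of a vertex. -/
abbrev connComp (v : V) : ConnComp src tgt := Quotient.mk _ v

/-- The set of two-edge connected components of a graph, i.e. the vertex set of the forest
`F(G)`, whose edges are the cut edges. -/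
abbrev Tecc : Type := Quotient (teccSetoid src tgt)

/-- The two-edge connected component of a vertex. -/
abbrev tecc (v : V) : Tecc src tgt := Quotient.mk _ v

variable {src tgt}

lemma connComp_eq_iff {a b : V} :
    connComp src tgt a = connComp src tgt b ↔ reachOn src tgt ∅ a b :=
  Quotient.eq

lemma tecc_eq_iff {a b : V} :
    tecc src tgt a = tecc src tgt b ↔ reachOn src tgt (cutEdges src tgt) a b :=
  Quotient.eq

lemma connComp_src_eq_tgt (e : E) : connComp src tgt (src e) = connComp src tgt (tgt e) :=
  connComp_eq_iff.2 (reachOn_src_tgt (Set.notMem_empty e))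

lemma tecc_src_eq_tgt {e : E} (he : ¬ IsCutEdge src tgt e) :
    tecc src tgt (src e) = tecc src tgt (tgt e) :=
  tecc_eq_iff.2 (reachOn_src_tgt he)

lemma connComp_eq_of_tecc_eq {a b : V} (h : tecc src tgt a = tecc src tgt b) :
    connComp src tgt a = connComp src tgt b :=
  connComp_eq_iff.2 ((tecc_eq_iff.1 h).anti (Set.empty_subset _))

lemma IsCutEdge.tecc_src_ne_tgt {e : E} (he : IsCutEdge src tgt e) :
    tecc src tgt (src e) ≠ tecc src tgt (tgt e) :=
  fun h => he ((tecc_eq_iff.1 h).anti (Set.singleton_subset_iff.2 he))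

end Components

/-! ### The forest of two-edge connected components -/

section Forest

variable {V E : Type} {src tgt : E → V}

/-- The side of the cut edge `e` containing its source, as an indicator function on the two-edge
connected components. It does not depend on the representatives only when `e` is a cut edge. -/
def cutSide (src tgt : E → V) (e : E) (c : Tecc src tgt) : ℚ :=
  if reachOn src tgt {e} (src e) c.out then 1 else 0

lemma cutSide_tecc {e : E} (he : IsCutEdge src tgt e) (v : V) :
    cutSide src tgt e (tecc src tgt v) = if reachOn src tgt {e} (src e) v then 1 else 0 := by
  have hout : reachOn src tgt {e} (tecc src tgt v).out v :=
    (tecc_eq_iff.1 (Quotient.out_eq _)).anti (Set.singleton_subset_iff.2 he)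
  exact if_congr ⟨fun h => h.trans hout, fun h => h.trans hout.symm⟩ rfl rfl

lemma cutSide_src_sub_tgt {e e' : E} (he : IsCutEdge src tgt e) :
    cutSide src tgt e (tecc src tgt (src e')) - cutSide src tgt e (tecc src tgt (tgt e')) =
      if e = e' then 1 else 0 := by
  rw [cutSide_tecc he, cutSide_tecc he]
  by_cases hee : e = e'
  · subst hee
    have hsrc : reachOn src tgt {e} (src e) (src e) := Relation.ReflTransGen.refl
    have htgt : ¬ reachOn src tgt {e} (src e) (tgt e) := he
    simp only [hsrc, htgt, if_true, if_false, sub_zero]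
  · have hside : reachOn src tgt {e} (src e') (tgt e') := reachOn_src_tgt (Ne.symm hee)
    have hiff : reachOn src tgt {e} (src e) (src e') ↔ reachOn src tgt {e} (src e) (tgt e') :=
      ⟨fun h => h.trans hside, fun h => h.trans hside.symm⟩
    simp only [hiff, hee, if_false, sub_self]

/-- The cut edges with both ends in the set `X` of two-edge connected components. -/
def innerCutEdges [Fintype E] (X : Finset (Tecc src tgt)) : Finset E :=
  {e | IsCutEdge src tgt e ∧ tecc src tgt (src e) ∈ X ∧ tecc src tgt (tgt e) ∈ X}

/-- The cut edges with exactly one end in the set `X` of two-edge connected components. -/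
def boundaryCutEdges [Fintype E] (X : Finset (Tecc src tgt)) : Finset E :=
  {e | IsCutEdge src tgt e ∧ Xor (tecc src tgt (src e) ∈ X) (tecc src tgt (tgt e) ∈ X)}

lemma linearIndependent_one_cutSide [Fintype E] {X : Finset (Tecc src tgt)} (hX : X.Nonempty) :
    LinearIndependent ℚ fun (o : Option (innerCutEdges X)) (c : X) =>
      o.elim 1 fun e => cutSide src tgt e.1 c.1 := by
  rw [Fintype.linearIndependent_iff]
  intro g hg
  have hzero : ∀ c ∈ X, g none + ∑ e, g (some e) * cutSide src tgt e.1 c = 0 := fun c hc => by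
    simpa [Fintype.sum_option] using congrFun hg ⟨c, hc⟩
  -- Subtracting the relations at the two ends of `e` leaves only the coefficient of `e`.
  have hsome : ∀ e, g (some e) = 0 := fun e => by
    obtain ⟨-, hsrc, htgt⟩ := (Finset.mem_filter.1 e.2).2
    calc g (some e) = ∑ e', g (some e') * if e'.1 = e.1 then 1 else 0 := by
          simp_rw [← Subtype.ext_iff, mul_ite, mul_one, mul_zero, Finset.sum_ite_eq',
            Finset.mem_univ, if_true]
      _ = ∑ e', g (some e') * (cutSide src tgt e'.1 (tecc src tgt (src e.1)) -
            cutSide src tgt e'.1 (tecc src tgt (tgt e.1))) :=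
          Finset.sum_congr rfl fun e' _ => by
            rw [cutSide_src_sub_tgt (Finset.mem_filter.1 e'.2).2.1]
      _ = 0 := by
          simp_rw [mul_sub, Finset.sum_sub_distrib]
          linarith [hzero _ hsrc, hzero _ htgt]
  rintro (_ | e)
  · obtain ⟨c, hc⟩ := hX
    simpa [hsome] using hzero c hc
  · exact hsome e

lemma card_innerCutEdges_lt [Fintype E] {X : Finset (Tecc src tgt)} (hX : X.Nonempty) :
    (innerCutEdges X).card < X.card := by
  simpa [Nat.succ_le_iff] using (linearIndependent_one_cutSide hX).fintype_card_le_finrank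

lemma teccDeg_eq_card [Fintype E] (c : Tecc src tgt) :
    teccDeg src tgt c = Finset.card {e : E | IsCutEdge src tgt e ∧
      (tecc src tgt (src e) = c ∨ tecc src tgt (tgt e) = c)} := by
  rw [teccDeg, Nat.card_eq_fintype_card, Fintype.card_subtype]

lemma sum_teccDeg [Fintype E] (X : Finset (Tecc src tgt)) :
    ∑ c ∈ X, teccDeg src tgt c = 2 * (innerCutEdges X).card + (boundaryCutEdges X).card := by
  simp_rw [teccDeg_eq_card, innerCutEdges, boundaryCutEdges, Finset.card_filter]
  rw [Finset.sum_comm, Finset.mul_sum, ← Finset.sum_add_distrib]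
  refine Finset.sum_congr rfl fun e _ => ?_
  by_cases he : IsCutEdge src tgt e
  swap
  · simp [he]
  have hends : ∀ c : Tecc src tgt,
      (if IsCutEdge src tgt e ∧ (tecc src tgt (src e) = c ∨ tecc src tgt (tgt e) = c)
        then 1 else 0) =
      (if tecc src tgt (src e) = c then 1 else 0) + if tecc src tgt (tgt e) = c then 1 else 0 := by
    intro c
    have hne := he.tecc_src_ne_tgt
    split_ifs <;> simp_all
  simp_rw [hends, Finset.sum_add_distrib, Finset.sum_ite_eq, he, true_and, Xor]
  split_ifs <;> simp_all

/-- The subtraction is truncated, so only leaves and isolated components contribute. -/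
lemma frak_eq_sum [Fintype (Tecc src tgt)] :
    frak src tgt = ∑ c : Tecc src tgt, (2 - teccDeg src tgt c) := by
  rw [frak, Nat.card_eq_fintype_card, Nat.card_eq_fintype_card, Fintype.card_subtype,
    Fintype.card_subtype, Finset.card_filter, Finset.card_filter, Finset.mul_sum,
    ← Finset.sum_add_distrib]
  refine Finset.sum_congr rfl fun c _ => ?_
  split_ifs <;> omega

lemma two_sub_card_boundaryCutEdges_le_sum [Fintype E] {X : Finset (Tecc src tgt)}
    (hX : X.Nonempty) :
    2 - (boundaryCutEdges X).card ≤ ∑ c ∈ X, (2 - teccDeg src tgt c) := by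
  have hforest := card_innerCutEdges_lt hX
  have hdeg := sum_teccDeg X
  have hsum : X.card * 2 ≤ ∑ c ∈ X, (2 - teccDeg src tgt c) + ∑ c ∈ X, teccDeg src tgt c := by
    rw [← Finset.sum_add_distrib, ← smul_eq_mul]
    exact Finset.card_nsmul_le_sum _ _ _ fun c _ => by omega
  omega

variable {V' : Type}

/-- The map induced on two-edge connected components by an identification of vertices. -/
def teccMap (src tgt : E → V) (q : V → V') : Tecc src tgt → Tecc (q ∘ src) (q ∘ tgt) :=
  Quotient.map q fun _ _ h =>
    (reachOn.comp q h).anti fun _ (he : IsCutEdge (q ∘ src) (q ∘ tgt) _) => he.of_comp q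

lemma teccMap_tecc (q : V → V') (v : V) :
    teccMap src tgt q (tecc src tgt v) = tecc (q ∘ src) (q ∘ tgt) (q v) :=
  rfl

lemma card_boundaryCutEdges_fiber_le [Fintype E] [Fintype (Tecc src tgt)] (q : V → V')
    (c : Tecc (q ∘ src) (q ∘ tgt)) :
    (boundaryCutEdges {d : Tecc src tgt | teccMap src tgt q d = c}).card ≤
      teccDeg (q ∘ src) (q ∘ tgt) c := by
  rw [teccDeg_eq_card]
  refine Finset.card_le_card fun e he => ?_
  replace he : Xor (tecc (q ∘ src) (q ∘ tgt) (q (src e)) = c)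
      (tecc (q ∘ src) (q ∘ tgt) (q (tgt e)) = c) := by
    simpa only [Finset.mem_filter, Finset.mem_univ, true_and, teccMap_tecc] using
      (Finset.mem_filter.1 he).2.2
  refine Finset.mem_filter.2 ⟨Finset.mem_univ e, ?_, he.or⟩
  by_contra hcut
  have hends : tecc (q ∘ src) (q ∘ tgt) (q (src e)) = tecc (q ∘ src) (q ∘ tgt) (q (tgt e)) :=
    tecc_src_eq_tgt hcut
  simp [hends, Xor] at he

lemma frak_comp_le [Finite V] [Finite E] {q : V → V'} (hq : Function.Surjective q) :
    frak (q ∘ src) (q ∘ tgt) ≤ frak src tgt := by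
  have : Finite V' := Finite.of_surjective q hq
  cases nonempty_fintype E
  cases nonempty_fintype (Tecc src tgt)
  cases nonempty_fintype (Tecc (q ∘ src) (q ∘ tgt))
  rw [frak_eq_sum, frak_eq_sum, ← Finset.sum_fiberwise Finset.univ (teccMap src tgt q)]
  refine Finset.sum_le_sum fun c _ => ?_
  have hfiber : ({d | teccMap src tgt q d = c} : Finset (Tecc src tgt)).Nonempty := by
    obtain ⟨v', rfl⟩ := Quotient.exists_rep c
    obtain ⟨v, rfl⟩ := hq v'
    exact ⟨tecc src tgt v, Finset.mem_filter.2 ⟨Finset.mem_univ _, teccMap_tecc q v⟩⟩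
  exact (Nat.sub_le_sub_left (card_boundaryCutEdges_fiber_le q c) 2).trans
    (two_sub_card_boundaryCutEdges_le_sum hfiber)

end Forest

/-! ### Additivity over connected components -/

section ConnectedComponents

variable {V E : Type} (src tgt : E → V)

/-- The vertices of the connected component `c`. -/
abbrev CompVertex (c : ConnComp src tgt) : Type := {v : V // connComp src tgt v = c}

/-- The edges of the connected component `c`; the component of an edge is that of its source. -/
abbrev CompEdge (c : ConnComp src tgt) : Type := {e : E // connComp src tgt (src e) = c}

/-- The source map of the connected component `c`. -/
def compSrc (c : ConnComp src tgt) (e : CompEdge src tgt c) : CompVertex src tgt c :=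
  ⟨src e.1, e.2⟩

/-- The target map of the connected component `c`. -/
def compTgt (c : ConnComp src tgt) (e : CompEdge src tgt c) : CompVertex src tgt c :=
  ⟨tgt e.1, (connComp_src_eq_tgt e.1).symm.trans e.2⟩

variable {src tgt} {c : ConnComp src tgt}

lemma reachOn_comp_iff {F : Set E} {a b : CompVertex src tgt c} :
    reachOn (compSrc src tgt c) (compTgt src tgt c) (Subtype.val ⁻¹' F) a b ↔
      reachOn src tgt F a.1 b.1 := by
  refine ⟨fun h => h.map Subtype.val Subtype.val (fun _ => rfl) (fun _ => rfl) subset_rfl, ?_⟩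
  obtain ⟨a, ha⟩ := a
  obtain ⟨b, hb⟩ := b
  intro (h : reachOn src tgt F a b)
  induction h with
  | refl => exact Relation.ReflTransGen.refl
  | @tail x y hax hxy ih =>
    have hx : connComp src tgt x = c :=
      (connComp_eq_iff.2 (reachOn.anti (Set.empty_subset F) hax)).symm.trans ha
    obtain ⟨e, he, ⟨rfl, rfl⟩ | ⟨rfl, rfl⟩⟩ := hxy
    · exact (ih hx).tail ⟨⟨e, hx⟩, he, Or.inl ⟨rfl, rfl⟩⟩
    · exact (ih hx).tail ⟨⟨e, hb⟩, he, Or.inr ⟨rfl, rfl⟩⟩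

lemma isConnectedGraph_comp (c : ConnComp src tgt) :
    IsConnectedGraph (compSrc src tgt c) (compTgt src tgt c) := fun a b =>
  reachOn_comp_iff.2 (connComp_eq_iff.1 (a.2.trans b.2.symm))

lemma isCutEdge_comp_iff {e : CompEdge src tgt c} :
    IsCutEdge (compSrc src tgt c) (compTgt src tgt c) e ↔ IsCutEdge src tgt e.1 := by
  have hsingleton : ({e} : Set (CompEdge src tgt c)) = Subtype.val ⁻¹' {e.1} :=
    Set.ext fun _ => Subtype.ext_iff
  rw [IsCutEdge, hsingleton, reachOn_comp_iff]
  rfl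

lemma tecc_comp_eq_iff {a b : CompVertex src tgt c} :
    tecc (compSrc src tgt c) (compTgt src tgt c) a =
      tecc (compSrc src tgt c) (compTgt src tgt c) b ↔ tecc src tgt a.1 = tecc src tgt b.1 := by
  have hcut : cutEdges (compSrc src tgt c) (compTgt src tgt c) =
      Subtype.val ⁻¹' cutEdges src tgt := Set.ext fun _ => isCutEdge_comp_iff
  rw [tecc_eq_iff, hcut, reachOn_comp_iff, tecc_eq_iff]

/-- The inclusion of the two-edge connected components of the connected component `c` into those
of the whole graph. -/
def compTecc (c : ConnComp src tgt) :
    Tecc (compSrc src tgt c) (compTgt src tgt c) → Tecc src tgt :=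
  Quotient.map Subtype.val fun _ _ h => Quotient.exact (tecc_comp_eq_iff.1 (Quotient.sound h))

variable (src tgt) in
lemma sigma_compTecc_bijective : Function.Bijective
    fun x : Σ c : ConnComp src tgt, Tecc (compSrc src tgt c) (compTgt src tgt c) =>
      compTecc x.1 x.2 := by
  constructor
  · rintro ⟨c, d⟩ ⟨c', d'⟩ h
    obtain ⟨⟨a, rfl⟩, rfl⟩ := Quotient.exists_rep d
    obtain ⟨⟨a', ha'⟩, rfl⟩ := Quotient.exists_rep d'
    have htecc : tecc src tgt a = tecc src tgt a' := h
    obtain rfl := (connComp_eq_of_tecc_eq htecc).trans ha'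
    exact congrArg (Sigma.mk _) (tecc_comp_eq_iff.2 htecc)
  · intro d
    obtain ⟨a, rfl⟩ := Quotient.exists_rep d
    exact ⟨⟨connComp src tgt a, tecc _ _ ⟨a, rfl⟩⟩, rfl⟩

lemma teccDeg_compTecc (d : Tecc (compSrc src tgt c) (compTgt src tgt c)) :
    teccDeg src tgt (compTecc c d) = teccDeg (compSrc src tgt c) (compTgt src tgt c) d := by
  obtain ⟨a, rfl⟩ := Quotient.exists_rep d
  have hmem : ∀ e, (IsCutEdge src tgt e ∧
      (tecc src tgt (src e) = tecc src tgt a.1 ∨ tecc src tgt (tgt e) = tecc src tgt a.1)) →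
      connComp src tgt (src e) = c := by
    rintro e ⟨-, he | he⟩
    · exact (connComp_eq_of_tecc_eq he).trans a.2
    · exact (connComp_src_eq_tgt e).trans ((connComp_eq_of_tecc_eq he).trans a.2)
  refine Nat.card_congr ((Equiv.subtypeSubtypeEquivSubtype (hmem _)).symm.trans
    (Equiv.subtypeEquivRight fun e => ?_))
  exact and_congr isCutEdge_comp_iff.symm (or_congr
    (tecc_comp_eq_iff (a := compSrc src tgt c e) (b := a)).symm
    (tecc_comp_eq_iff (a := compTgt src tgt c e) (b := a)).symm)

variable (src tgt) in
lemma sum_frak_comp [Finite V] [Fintype (ConnComp src tgt)] :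
    ∑ c, frak (compSrc src tgt c) (compTgt src tgt c) = frak src tgt := by
  cases nonempty_fintype V
  simp_rw [frak_eq_sum]
  rw [← Fintype.sum_sigma', ← (sigma_compTecc_bijective src tgt).sum_comp]
  simp_rw [teccDeg_compTecc]

end ConnectedComponents

/-! ### Traces of graphs of matrices -/

section GraphTrace

variable {V E ι R : Type*} [Fintype V] [Fintype E] [Fintype ι] [CommSemiring R]

/-- The unnormalized trace of a graph whose edges carry matrices: the sum over all maps from the
vertices to the matrix indices. -/
def graphTrace (src tgt : E → V) (M : E → Matrix ι ι R) : R :=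
  ∑ φ : V → ι, ∏ e, M e (φ (tgt e)) (φ (src e))

/-- The unnormalized injective trace of a graph whose edges carry matrices: only injective maps
from the vertices to the matrix indices are summed over. -/
def injGraphTrace (src tgt : E → V) (M : E → Matrix ι ι R) : R :=
  ∑ φ : V → ι with Function.Injective φ, ∏ e, M e (φ (tgt e)) (φ (src e))

lemma sum_ker_eq_injGraphTrace {W : Type*} [Fintype W] {q : V → W} (hq : Function.Surjective q)
    (src tgt : E → V) (M : E → Matrix ι ι R) :
    ∑ φ : V → ι with Setoid.ker φ = Setoid.ker q, ∏ e, M e (φ (tgt e)) (φ (src e)) =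
      injGraphTrace (q ∘ src) (q ∘ tgt) M := by
  symm
  refine Finset.sum_bij (fun ψ _ => ψ ∘ q) (fun ψ hψ => ?_)
    (fun ψ _ ψ' _ h => hq.injective_comp_right h) (fun φ hφ => ?_) fun _ _ => rfl
  · have hinj : Function.Injective ψ := (Finset.mem_filter.1 hψ).2
    exact Finset.mem_filter.2 ⟨Finset.mem_univ _, Setoid.ext fun a b => hinj.eq_iff⟩
  · have hker : ∀ a b, φ a = φ b ↔ q a = q b := Setoid.ext_iff.1 (Finset.mem_filter.1 hφ).2
    refine ⟨φ ∘ Function.surjInv hq, Finset.mem_filter.2 ⟨Finset.mem_univ _, fun x y h => ?_⟩,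
      funext fun v => (hker _ _).2 (Function.surjInv_eq hq _)⟩
    simpa only [Function.surjInv_eq] using (hker _ _).1 h

lemma graphTrace_eq_injGraphTrace_add_sum [Fintype (Setoid V)] (src tgt : E → V)
    (M : E → Matrix ι ι R) :
    graphTrace src tgt M = injGraphTrace src tgt M + ∑ π ∈ Finset.univ.erase (⊥ : Setoid V),
      injGraphTrace (Quotient.mk π ∘ src) (Quotient.mk π ∘ tgt) M := by
  rw [graphTrace, ← Finset.sum_fiberwise Finset.univ Setoid.ker,
    ← Finset.add_sum_erase _ _ (Finset.mem_univ (⊥ : Setoid V))]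
  congr 1
  · simp_rw [← Setoid.injective_iff_ker_bot, injGraphTrace]
  · refine Finset.sum_congr rfl fun π _ => ?_
    rw [← sum_ker_eq_injGraphTrace Quotient.mk_surjective, Setoid.ker_mk_eq]

lemma prod_sum_fiber {C : Type*} [Fintype C] (p : V → C) [∀ c, Fintype ({v // p v = c} → ι)]
    (w : ∀ c, ({v // p v = c} → ι) → R) :
    ∏ c, ∑ φ, w c φ = ∑ φ : V → ι, ∏ c, w c fun v => φ v.1 :=
  (Fintype.prod_sum w).trans ((((Equiv.sigmaFiberEquiv p).symm.arrowCongr (.refl ι)).trans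
    (Equiv.piCurry fun _ _ => ι)).sum_comp fun ψ : ∀ c, {v // p v = c} → ι =>
      ∏ c, w c (ψ c)).symm

lemma graphTrace_eq_prod_comp {V E : Type} [Fintype V] [Fintype E] (src tgt : E → V)
    [Fintype (ConnComp src tgt)] (M : E → Matrix ι ι R) :
    graphTrace src tgt M =
      ∏ c, graphTrace (compSrc src tgt c) (compTgt src tgt c) fun e => M e.1 := by
  calc graphTrace src tgt M
      = ∑ φ : V → ι, ∏ c, ∏ e : CompEdge src tgt c, M e.1 (φ (tgt e.1)) (φ (src e.1)) :=
        Finset.sum_congr rfl fun φ _ =>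
          (Fintype.prod_fiberwise (fun e => connComp src tgt (src e)) _).symm
    _ = ∏ c, ∑ φ : {v // connComp src tgt v = c} → ι, ∏ e : CompEdge src tgt c,
          M e.1 (φ (compTgt src tgt c e)) (φ (compSrc src tgt c e)) :=
        by
          rw [prod_sum_fiber]
          rfl
    _ = ∏ c, graphTrace (compSrc src tgt c) (compTgt src tgt c) fun e => M e.1 :=
        Finset.prod_congr rfl fun c _ => by
          unfold graphTrace
          congr!

lemma GraphMonomial.trace_eval {L : ℕ} {K : Type} {g : GraphMonomial L K} (hg : g.vin = g.vout)
    {N : ℕ} (A : Fin L → K → Matrix (Fin N) (Fin N) ℂ) :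
    Matrix.trace (g.eval A) = graphTrace g.src g.tgt fun e => A (g.labL e) (g.labK e) := by
  simp only [Matrix.trace, Matrix.diag_apply, GraphMonomial.eval, Matrix.of_apply, hg, and_self]
  rw [Finset.sum_comm]
  simp only [Finset.sum_ite_eq, Finset.mem_univ, if_true]
  rfl

lemma TestGraph.tau0Inner_eq_injGraphTrace {N : ℕ} {Ω : Type} (T : TestGraph N Ω) (ω : Ω) :
    T.tau0Inner ω = injGraphTrace T.src T.tgt fun e => T.lab e ω := by
  rw [injGraphTrace, Finset.sum_filter, TestGraph.tau0Inner]
  congr!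

end GraphTrace

/-! ### Moments of random matrices -/

section Moments

variable {Ω V E ι 𝕜 : Type*} [MeasurableSpace Ω] {μ : Measure Ω} [NormedCommRing 𝕜]

/-- The entries of the random matrix `X` have finite moments of all orders. -/
def HasFiniteMoments (μ : Measure Ω) (X : Ω → Matrix ι ι 𝕜) : Prop :=
  ∀ i j (p : NNReal), MemLp (fun ω => X ω i j) p μ

lemma EntriesBounded.hasFiniteMoments {Ω : Type} [MeasurableSpace Ω] {μ : Measure Ω}
    [IsFiniteMeasure μ] {N : ℕ} {X : Ω → Matrix (Fin N) (Fin N) ℂ} (hbdd : EntriesBounded μ X)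
    (hmeas : EntriesMeasurable X) : HasFiniteMoments μ X := by
  obtain ⟨C, hC⟩ := hbdd
  exact fun i j p => MemLp.of_bound (hmeas i j).aestronglyMeasurable C (hC.mono fun ω h => h i j)

variable [IsFiniteMeasure μ] [Fintype E] {B : E → Ω → Matrix ι ι 𝕜}

lemma integrable_prod_entries (hB : ∀ e, HasFiniteMoments μ (B e)) (i j : E → ι) :
    Integrable (fun ω => ∏ e, B e ω (i e) (j e)) μ := by
  have hone : 1 ≤ (∑ _e : E, ((Fintype.card E : NNReal) : ℝ≥0∞)⁻¹)⁻¹ := by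
    simp [ENNReal.mul_inv_le_one]
  exact (MemLp.prod' fun e _ => hB e (i e) (j e) (Fintype.card E)).integrable hone

variable [Fintype V] [Fintype ι]

lemma integrable_injGraphTrace (src tgt : E → V) (hB : ∀ e, HasFiniteMoments μ (B e)) :
    Integrable (fun ω => injGraphTrace src tgt fun e => B e ω) μ :=
  integrable_finsetSum _ fun _ _ => integrable_prod_entries hB _ _

lemma integral_injGraphTrace [NormedSpace ℝ 𝕜] [Fintype (Setoid V)] (src tgt : E → V)
    (hB : ∀ e, HasFiniteMoments μ (B e)) :
    ∫ ω, injGraphTrace src tgt (fun e => B e ω) ∂μ =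
      ∫ ω, graphTrace src tgt (fun e => B e ω) ∂μ - ∑ π ∈ Finset.univ.erase (⊥ : Setoid V),
        ∫ ω, injGraphTrace (Quotient.mk π ∘ src) (Quotient.mk π ∘ tgt) (fun e => B e ω) ∂μ := by
  simp_rw [graphTrace_eq_injGraphTrace_add_sum]
  rw [integral_add (integrable_injGraphTrace src tgt hB)
      (integrable_finsetSum _ fun π _ => integrable_injGraphTrace _ _ hB),
    integral_finsetSum _ fun π _ => integrable_injGraphTrace _ _ hB, add_sub_cancel_right]

end Moments

/-! ### Growth of traces -/

section Growth

lemma rpow_isBigO_rpow_of_le {x y : ℝ} (h : x ≤ y) :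
    (fun t : ℝ => t ^ x) =O[atTop] fun t : ℝ => t ^ y := by
  refine IsBigO.of_norm_eventuallyLE ?_
  filter_upwards [eventually_ge_atTop 1] with t ht
  rw [Real.norm_of_nonneg (by positivity)]
  exact Real.rpow_le_rpow_of_exponent_le ht h

lemma card_quotient_lt {α : Type*} [Fintype α] {π : Setoid α} (hπ : π ≠ ⊥) :
    Fintype.card (Quotient π) < Fintype.card α := by
  refine Fintype.card_lt_of_surjective_not_injective _ Quotient.mk_surjective fun hinj => hπ ?_
  rw [← Setoid.ker_mk_eq π, ← Setoid.injective_iff_ker_bot]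
  exact hinj

variable {V E : Type} [Fintype V] [Fintype E] {L : ℕ} {K : Type}

/-- The connected component `c` as a graph monomial in the family `ℓ`, rooted twice at an arbitrary
vertex. -/
def compMonomial (src tgt : E → V) (ℓ : Fin L) (labK : E → K) (c : ConnComp src tgt) :
    GraphMonomial L K where
  V := CompVertex src tgt c
  E := CompEdge src tgt c
  fintV := inferInstance
  fintE := inferInstance
  src := compSrc src tgt c
  tgt := compTgt src tgt c
  vin := ⟨c.out, c.out_eq⟩
  vout := ⟨c.out, c.out_eq⟩
  labL := fun _ => ℓ
  labK := fun e => labK e.1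

/-- The test graph whose edges carry the matrices of a single family `B`. -/
def familyTestGraph {Ω : Type} {N : ℕ} (B : K → Ω → Matrix (Fin N) (Fin N) ℂ) (src tgt : E → V)
    (labK : E → K) : TestGraph N Ω where
  V := V
  E := E
  fintV := inferInstance
  fintE := inferInstance
  src := src
  tgt := tgt
  lab := fun e => B (labK e)

lemma colSubTG_eq_familyTestGraph {Ω : Type} {N : ℕ}
    (B : Fin L → K → Ω → Matrix (Fin N) (Fin N) ℂ) (src tgt : E → V) (labL : E → Fin L)
    (labK : E → K) (ℓ : Fin L) :
    colSubTG src tgt labL ℓ N (fun e => B (labL e) (labK e)) =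
      familyTestGraph (B ℓ) (colSubSrc src tgt labL ℓ) (colSubTgt src tgt labL ℓ)
        fun e => labK e.1 := by
  have hlab : (fun e : {e : E // labL e = ℓ} => B (labL e.1) (labK e.1)) =
      fun e => B ℓ (labK e.1) := funext fun e => by rw [e.2]
  rw [colSubTG, familyTestGraph, hlab]
  congr!

variable {Ω : Type} [MeasurableSpace Ω] {μ : Measure Ω}
  {A : (N : ℕ) → Fin L → K → Ω → Matrix (Fin N) (Fin N) ℂ} {ℓ : Fin L}

lemma MSBound.prod_trace_isBigO (hms : MSBound μ A ℓ) {κ : Type*} [Fintype κ] [Nonempty κ]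
    {g : κ → GraphMonomial L K} (hg : ∀ i, IsConnectedGraph (g i).src (g i).tgt ∧
      (∀ e, (g i).labL e = ℓ) ∧ (g i).vin = (g i).vout) :
    (fun N : ℕ => ∫ ω, ∏ i, Matrix.trace ((g i).eval fun ℓ' k => A N ℓ' k ω) ∂μ)
      =O[atTop] fun N : ℕ => (N : ℝ) ^ ((∑ i, (frak (g i).src (g i).tgt : ℝ)) / 2) := by
  have h := hms _ Fintype.card_pos (g ∘ (Fintype.equivFin κ).symm) fun i => hg _
  simp_rw [Function.comp_apply, Equiv.sum_comp (Fintype.equivFin κ).symm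
    fun i => (frak (g i).src (g i).tgt : ℝ)] at h
  refine h.congr_left fun N => integral_congr_ae (.of_forall fun ω => ?_)
  exact Equiv.prod_comp (Fintype.equivFin κ).symm
    fun i => Matrix.trace ((g i).eval fun ℓ' k => A N ℓ' k ω)

lemma MSBound.graphTrace_isBigO (hms : MSBound μ A ℓ) (src tgt : E → V) (labK : E → K) :
    (fun N : ℕ => ∫ ω, graphTrace src tgt (fun e => A N ℓ (labK e) ω) ∂μ)
      =O[atTop] fun N : ℕ => (N : ℝ) ^ ((frak src tgt : ℝ) / 2) := by
  rcases isEmpty_or_nonempty V with hV | hV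
  · have : IsEmpty E := src.isEmpty
    simpa [graphTrace, frak] using isBigO_const_const (μ.real Set.univ : ℂ) (one_ne_zero' ℝ) _
  have : Nonempty (ConnComp src tgt) := hV.map (connComp src tgt)
  cases nonempty_fintype (ConnComp src tgt)
  have h := hms.prod_trace_isBigO (g := compMonomial src tgt ℓ labK)
    fun c => ⟨isConnectedGraph_comp c, fun _ => rfl, rfl⟩
  rw [← sum_frak_comp src tgt, Nat.cast_sum]
  refine h.congr_left fun N => integral_congr_ae (.of_forall fun ω => ?_)
  beta_reduce
  rw [graphTrace_eq_prod_comp]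
  refine Finset.prod_congr rfl fun c _ => ?_
  exact GraphMonomial.trace_eval (g := compMonomial src tgt ℓ labK c) rfl _

variable [IsFiniteMeasure μ]

lemma MSBound.injGraphTrace_isBigO (hms : MSBound μ A ℓ)
    (hmom : ∀ N k, HasFiniteMoments μ (A N ℓ k)) (src tgt : E → V) (labK : E → K) :
    (fun N : ℕ => ∫ ω, injGraphTrace src tgt (fun e => A N ℓ (labK e) ω) ∂μ)
      =O[atTop] fun N : ℕ => (N : ℝ) ^ ((frak src tgt : ℝ) / 2) := by
  induction hn : Fintype.card V using Nat.strong_induction_on generalizing V with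
  | _ n ih =>
  have : Finite (Setoid V) := .of_injective (fun π : Setoid V => π.r) fun _ _ h =>
    Setoid.ext fun a b => iff_of_eq (congrFun₂ h a b)
  cases nonempty_fintype (Setoid V)
  simp_rw [fun N => integral_injGraphTrace src tgt fun e => hmom N (labK e)]
  refine (hms.graphTrace_isBigO src tgt labK).sub (IsBigO.fun_sum fun π hπ => ?_)
  have hcard : Fintype.card (Quotient π) < n :=
    hn ▸ card_quotient_lt (Finset.ne_of_mem_erase hπ)
  have hfrak : (frak (Quotient.mk π ∘ src) (Quotient.mk π ∘ tgt) : ℝ) ≤ frak src tgt :=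
    Nat.cast_le.2 (frak_comp_le Quotient.mk_surjective)
  exact (ih _ hcard _ _ rfl).trans (rpow_isBigO_rpow_of_le (by gcongr)).natCast_atTop

lemma MSBound.tau0_isBigO (hms : MSBound μ A ℓ) (hmom : ∀ N k, HasFiniteMoments μ (A N ℓ k))
    (src tgt : E → V) (labK : E → K) :
    (fun N : ℕ => (familyTestGraph (A N ℓ) src tgt labK).tau0 μ)
      =O[atTop] fun N : ℕ => (N : ℝ) ^ ((frak src tgt : ℝ) / 2 - (ncomp src tgt : ℝ)) := by
  have hnorm : (fun N : ℕ => ((N : ℂ) ^ ncomp src tgt)⁻¹) =O[atTop]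
      fun N : ℕ => ((N : ℝ) ^ ncomp src tgt)⁻¹ :=
    .of_bound 1 (.of_forall fun N => by simp)
  simp_rw [TestGraph.tau0, TestGraph.tau0Inner_eq_injGraphTrace]
  refine (hnorm.mul (hms.injGraphTrace_isBigO hmom src tgt labK)).trans_eventuallyEq ?_
  filter_upwards [eventually_gt_atTop 0] with N hN
  rw [Real.rpow_sub (Nat.cast_pos.2 hN), Real.rpow_natCast, div_eq_inv_mul (_ ^ _)]

end Growth

theorem tau0_bigO_of_MSBound_general
    {Ω : Type} [MeasurableSpace Ω] (μ : Measure Ω) [IsFiniteMeasure μ] {K : Type} {L : ℕ}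
    (A : (N : ℕ) → Fin L → K → Ω → Matrix (Fin N) (Fin N) ℂ)
    (hmom : ∀ N ℓ k, HasFiniteMoments μ (A N ℓ k))
    (hms : ∀ ℓ : Fin L, MSBound μ A ℓ) :
    (∀ (ℓ : Fin L) (V E : Type) [Fintype V] [Fintype E]
        (src tgt : E → V) (labK : E → K),
      (fun N : ℕ => TestGraph.tau0
          (TestGraph.mk V E inferInstance inferInstance src tgt
            fun e ω => A N ℓ (labK e) ω) μ)
        =O[atTop] fun N : ℕ =>
          (N : ℝ) ^ ((frak src tgt : ℝ) / 2 - (ncomp src tgt : ℝ))) ∧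
    (∀ (V E : Type) [Fintype V] [Fintype E] (src tgt : E → V)
        (labL : E → Fin L) (labK : E → K),
      (fun N : ℕ => ∏ ℓ : Fin L, TestGraph.tau0
          (colSubTG src tgt labL ℓ N fun e ω => A N (labL e) (labK e) ω) μ)
        =O[atTop] fun N : ℕ =>
          (N : ℝ) ^
            ((∑ ℓ : Fin L,
                (frak (colSubSrc src tgt labL ℓ) (colSubTgt src tgt labL ℓ) : ℝ)) / 2 -
              ∑ ℓ : Fin L,
                (ncomp (colSubSrc src tgt labL ℓ) (colSubTgt src tgt labL ℓ) : ℝ))) := by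
  refine ⟨fun ℓ V E _ _ src tgt labK => (hms ℓ).tau0_isBigO (fun N => hmom N ℓ) src tgt labK,
    fun V E _ _ src tgt labL labK => ?_⟩
  have hcolor := IsBigO.finsetProd (s := Finset.univ) fun ℓ _ =>
    (hms ℓ).tau0_isBigO (fun N => hmom N ℓ) (colSubSrc src tgt labL ℓ) (colSubTgt src tgt labL ℓ)
      fun e => labK e.1
  simp_rw [← fun N ℓ => colSubTG_eq_familyTestGraph (A N) src tgt labL labK ℓ] at hcolor
  refine hcolor.trans_eventuallyEq ?_
  filter_upwards [eventually_gt_atTop 0] with N hN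
  rw [← Real.rpow_sum_of_pos (Nat.cast_pos.2 hN), Finset.sum_sub_distrib, Finset.sum_div]

/-- Lemma 4.8.
Under the growth bound (MS): (i) for every test graph `T̂` labelled by
matrices of one single family `ℓ`, `τ⁰_N[T̂] = O(N^{𝔣(T̂)/2 - c(T̂)})`;
(ii) consequently, for any test graph `T'` labelled by the families, the
product over `ℓ` of the `τ⁰_N[T'_ℓ]` of the unions of the colored components
is `O(N^{Σ_{S ∈ CC(T')} 𝔣(S)/2 - |CC(T')|})`. -/
theorem tau0_bigO_of_MSBound
    {Ω : Type} [MeasurableSpace Ω] (μ : Measure Ω) [IsProbabilityMeasure μ]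
    {K : Type} [Nonempty K] [Finite K] {L : ℕ} (hL : 1 ≤ L)
    (A : (N : ℕ) → Fin L → K → Ω → Matrix (Fin N) (Fin N) ℂ)
    (hmeas : ∀ N ℓ k, EntriesMeasurable (A N ℓ k))
    (hbdd : ∀ N ℓ k, EntriesBounded μ (A N ℓ k))
    (hms : ∀ ℓ : Fin L, MSBound μ A ℓ) :
    (∀ (ℓ : Fin L) (V E : Type) [Fintype V] [Fintype E]
        (src tgt : E → V) (labK : E → K),
      (fun N : ℕ => TestGraph.tau0
          (TestGraph.mk V E inferInstance inferInstance src tgt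
            fun e ω => A N ℓ (labK e) ω) μ)
        =O[atTop] fun N : ℕ =>
          (N : ℝ) ^ ((frak src tgt : ℝ) / 2 - (ncomp src tgt : ℝ))) ∧
    (∀ (V E : Type) [Fintype V] [Fintype E] (src tgt : E → V)
        (labL : E → Fin L) (labK : E → K),
      (fun N : ℕ => ∏ ℓ : Fin L, TestGraph.tau0
          (colSubTG src tgt labL ℓ N fun e ω => A N (labL e) (labK e) ω) μ)
        =O[atTop] fun N : ℕ =>
          (N : ℝ) ^
            ((∑ ℓ : Fin L,
                (frak (colSubSrc src tgt labL ℓ) (colSubTgt src tgt labL ℓ) : ℝ)) / 2 -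
              ∑ ℓ : Fin L,
                (ncomp (colSubSrc src tgt labL ℓ) (colSubTgt src tgt labL ℓ) : ℝ))) :=
  tau0_bigO_of_MSBound_general μ A (fun N ℓ k => (hbdd N ℓ k).hasFiniteMoments (hmeas N ℓ k)) hms
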